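/- Each of the three compositions r_t ∘ r_b, r_u ∘ r_ℓ and r_c ∘ r_{i₀} has infinite order in GL(5,ℝ) (these are parabolic isometries of ℍ⁴, since the corresponding pairs of bounding hyperplanes of Q are tangent at infinity). -/

import Mathlib

noncomputable section

open Real

/-- The Minkowski bilinear form of signature (1,4) on `ℝ^5`. -/
def B (x y : Fin 5 → ℝ) : ℝ :=
  -(x 0 * y 0) + x 1 * y 1 + x 2 * y 2 + x 3 * y 3 + x 4 * y 4

/-- The Kerckhoff–Storm vector `t`. -/
def vt : Fin 5 → ℝ := ![Real.sqrt 2, 1, 1, 1, Real.sqrt 7]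
/-- The Kerckhoff–Storm vector `b`. -/
def vb : Fin 5 → ℝ := ![Real.sqrt 2, 1, 1, -1, -Real.sqrt 7]
/-- The Kerckhoff–Storm vector `u`. -/
def vu : Fin 5 → ℝ := ![Real.sqrt 2, 1, 1, 1, -(Real.sqrt 7 / 7)]
/-- The Kerckhoff–Storm vector `ℓ`. -/
def vl : Fin 5 → ℝ := ![Real.sqrt 2, 1, 1, -1, Real.sqrt 7 / 7]
/-- The Kerckhoff–Storm vector `c`. -/
def vc : Fin 5 → ℝ := ![1, Real.sqrt 2, 0, 0, 0]
/-- The Kerckhoff–Storm vector `i₀`. -/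
def vi0 : Fin 5 → ℝ := ![0, -1, 1, 0, 0]
/-- The Kerckhoff–Storm vector `i₁`. -/
def vi1 : Fin 5 → ℝ := ![0, 0, -1, -1, 0]
/-- The Kerckhoff–Storm vector `i₂`. -/
def vi2 : Fin 5 → ℝ := ![0, 0, -1, 1, 0]

/-- The Minkowski reflection along a vector `v` with `B v v ≠ 0`. -/
def mrefl (v : Fin 5 → ℝ) (x : Fin 5 → ℝ) : Fin 5 → ℝ :=
  x - (2 * (B x v / B v v)) • v

/-!
If the form degenerates on the plane spanned by `v` and `w`, then `r_v ∘ r_w` is unipotent on that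
plane: its iterates move `w` by multiples of one fixed null vector. Linear independence of `v` and
`w` makes that vector nonzero, so the translates of `w` never return.
-/

theorem linearIndependent_of_minor_ne_zero {ι R : Type*} [CommRing R] [NoZeroDivisors R]
    {v w : ι → R} (i j : ι) (h : v i * w j - v j * w i ≠ 0) : LinearIndependent R ![v, w] := by
  rw [LinearIndependent.pair_iff]
  intro s t hst
  have hi : s * v i + t * w i = 0 := congrFun hst i
  have hj : s * v j + t * w j = 0 := congrFun hst j
  constructor
  · refine (mul_eq_zero.mp ?_).resolve_right h
    linear_combination w j * hi - w i * hj
  · refine (mul_eq_zero.mp ?_).resolve_right h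
    linear_combination v i * hj - v j * hi

section Reflection

open Module LinearMap

variable {R M : Type*} [CommRing R] [AddCommGroup M] [Module R M]

theorem not_isOfFinOrder_reflection_mul_reflection [IsAddTorsionFree M] {f g : Dual R M} {x y : M}
    (hfx : f x = 2) (hgy : g y = 2) (hfg : f y * g x = 4) (hne : f y • x ≠ (2 : R) • y) :
    ¬IsOfFinOrder (reflection hfx * reflection hgy) := by
  rw [isOfFinOrder_iff_pow_eq_one]
  rintro ⟨n, hn, hpow⟩
  have hfixed : (reflection hfx * reflection hgy)^[n] y = y := by
    rw [← LinearEquiv.coe_pow, hpow, LinearEquiv.coe_one, id_eq]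
  have htranslate : y + n • (f y • x - (2 : R) • y) = y :=
    (reflection_reflection_iterate hfx hgy hfg n).symm.trans hfixed
  rw [add_eq_left, nsmul_eq_zero_iff_right hn.ne', sub_eq_zero] at htranslate
  exact hne htranslate

variable {β : LinearMap.BilinForm R M} {x y : M}

theorem coroot_apply_mul_coroot_apply_eq_four (hx : IsReflective β x) (hy : IsReflective β y)
    (hxy : β x y * β y x = β x x * β y y) : hx.coroot β y * hy.coroot β x = 4 := by
  apply (hx.regular.mul hy.regular).left
  calc β x x * β y y * (hx.coroot β y * hy.coroot β x)
      = (β x x * hx.coroot β y) * (β y y * hy.coroot β x) := by ring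
    _ = (2 * β x y) * (2 * β y x) := by
      rw [IsReflective.apply_self_mul_coroot_apply, IsReflective.apply_self_mul_coroot_apply]
    _ = β x x * β y y * 4 := by linear_combination 4 * hxy

theorem not_isOfFinOrder_reflection_coroot_mul_reflection_coroot [Nontrivial R]
    [IsAddTorsionFree M] (hx : IsReflective β x) (hy : IsReflective β y)
    (hxy : β x y * β y x = β x x * β y y) (hli : LinearIndependent R ![x, y]) :
    ¬IsOfFinOrder (reflection (hx.coroot_apply_self β) * reflection (hy.coroot_apply_self β)) := by
  refine not_isOfFinOrder_reflection_mul_reflection _ _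
    (coroot_apply_mul_coroot_apply_eq_four hx hy hxy) fun heq ↦ ?_
  have htwo : (2 : R) = 0 := by
    refine neg_eq_zero.mp (LinearIndependent.pair_iff.mp hli (hx.coroot β y) (-2) ?_).2
    rw [heq, neg_smul, add_neg_cancel]
  have hy_zero : y = 0 := by
    rw [← nsmul_eq_zero_iff_right two_ne_zero, ← ofNat_smul_eq_nsmul R 2 y, htwo, zero_smul]
  exact hli.ne_zero 1 hy_zero

end Reflection

section Minkowski

/-- The form `B` bundled as a bilinear form, so that Mathlib's reflections apply to it. -/
def minkowskiForm : LinearMap.BilinForm ℝ (Fin 5 → ℝ) :=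
  LinearMap.mk₂ ℝ B
    (fun x y z ↦ by simp only [B, Pi.add_apply]; ring)
    (fun a x y ↦ by simp only [B, Pi.smul_apply, smul_eq_mul]; ring)
    (fun x y z ↦ by simp only [B, Pi.add_apply]; ring)
    (fun a x y ↦ by simp only [B, Pi.smul_apply, smul_eq_mul]; ring)

theorem minkowskiForm_apply (x y : Fin 5 → ℝ) : minkowskiForm x y = B x y :=
  rfl

theorem B_comm (x y : Fin 5 → ℝ) : B x y = B y x := by
  simp only [B]; ring

variable {v w : Fin 5 → ℝ}

theorem mrefl_eq_reflection_coroot (hv : minkowskiForm.IsReflective v) :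
    mrefl v = Module.reflection (hv.coroot_apply_self minkowskiForm) := by
  funext x
  have hcoroot : hv.coroot minkowskiForm x = 2 * (B x v / B v v) := by
    have hBv : B v v ≠ 0 := hv.regular.ne_zero
    rw [← mul_div_assoc, eq_div_iff hBv, mul_comm, B_comm x v]
    exact hv.apply_self_mul_coroot_apply minkowskiForm
  rw [Module.reflection_apply, hcoroot, mrefl]

/-- The hyperplanes of `ℍ⁴` orthogonal to the spacelike vectors `v` and `w` are distinct and meet
in a single point at infinity: `v` and `w` span a plane on which `B` is degenerate. -/
structure TangentAtInfinity (v w : Fin 5 → ℝ) : Prop where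
  spacelike_left : 0 < B v v
  spacelike_right : 0 < B w w
  sq_eq_mul : B v w ^ 2 = B v v * B w w
  linearIndependent : LinearIndependent ℝ ![v, w]

theorem TangentAtInfinity.mrefl_comp_mrefl_iterate_ne_id (h : TangentAtInfinity v w) {n : ℕ}
    (hn : n ≠ 0) : (mrefl v ∘ mrefl w)^[n] ≠ id := by
  have hv : minkowskiForm.IsReflective v := .of_dvd_two _ h.spacelike_left.ne'.isUnit.dvd
  have hw : minkowskiForm.IsReflective w := .of_dvd_two _ h.spacelike_right.ne'.isUnit.dvd
  have hdegenerate : minkowskiForm v w * minkowskiForm w v =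
      minkowskiForm v v * minkowskiForm w w := by
    simp only [minkowskiForm_apply, B_comm w v, ← sq, h.sq_eq_mul]
  intro hid
  refine not_isOfFinOrder_reflection_coroot_mul_reflection_coroot hv hw hdegenerate
    h.linearIndependent (isOfFinOrder_iff_pow_eq_one.mpr ⟨n, Nat.pos_of_ne_zero hn, ?_⟩)
  rw [mrefl_eq_reflection_coroot hv, mrefl_eq_reflection_coroot hw] at hid
  exact DFunLike.coe_injective ((LinearEquiv.coe_pow _ n).trans hid)

end Minkowski

section KerckhoffStorm

theorem B_vt_vt : B vt vt = 8 := by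
  simp only [B, vt, Matrix.cons_val]
  norm_num

theorem B_vb_vb : B vb vb = 8 := by
  simp only [B, vb, Matrix.cons_val]
  norm_num

theorem B_vt_vb : B vt vb = -8 := by
  simp only [B, vt, vb, Matrix.cons_val]
  norm_num

theorem B_vu_vu : B vu vu = 8 / 7 := by
  simp only [B, vu, Matrix.cons_val]
  norm_num [div_mul_div_comm]

theorem B_vl_vl : B vl vl = 8 / 7 := by
  simp only [B, vl, Matrix.cons_val]
  norm_num [div_mul_div_comm]

theorem B_vu_vl : B vu vl = -8 / 7 := by
  simp only [B, vu, vl, Matrix.cons_val]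
  norm_num [div_mul_div_comm]

theorem B_vc_vc : B vc vc = 1 := by
  simp only [B, vc, Matrix.cons_val]
  norm_num

theorem B_vi0_vi0 : B vi0 vi0 = 2 := by
  simp only [B, vi0, Matrix.cons_val]
  norm_num

theorem B_vc_vi0 : B vc vi0 = -√2 := by
  simp [B, vc, vi0]

theorem tangentAtInfinity_vt_vb : TangentAtInfinity vt vb where
  spacelike_left := by norm_num [B_vt_vt]
  spacelike_right := by norm_num [B_vb_vb]
  sq_eq_mul := by norm_num [B_vt_vt, B_vb_vb, B_vt_vb]
  linearIndependent := linearIndependent_of_minor_ne_zero 1 3 <| by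
    simp only [vt, vb, Matrix.cons_val]
    norm_num

theorem tangentAtInfinity_vu_vl : TangentAtInfinity vu vl where
  spacelike_left := by norm_num [B_vu_vu]
  spacelike_right := by norm_num [B_vl_vl]
  sq_eq_mul := by norm_num [B_vu_vu, B_vl_vl, B_vu_vl]
  linearIndependent := linearIndependent_of_minor_ne_zero 1 3 <| by
    simp only [vu, vl, Matrix.cons_val]
    norm_num

theorem tangentAtInfinity_vc_vi0 : TangentAtInfinity vc vi0 where
  spacelike_left := by norm_num [B_vc_vc]
  spacelike_right := by norm_num [B_vi0_vi0]
  sq_eq_mul := by norm_num [B_vc_vc, B_vi0_vi0, B_vc_vi0]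
  linearIndependent := linearIndependent_of_minor_ne_zero 0 2 (by simp [vc, vi0])

end KerckhoffStorm

/-- Each of `r_t ∘ r_b`, `r_u ∘ r_ℓ` and `r_c ∘ r_{i₀}` has infinite order:
no positive iterate is the identity (these are parabolic isometries of `ℍ⁴`). -/
theorem kerckhoff_storm_parabolic_pairs_infinite_order :
    ∀ p ∈ [(vt, vb), (vu, vl), (vc, vi0)],
      ∀ n : ℕ, n ≠ 0 → (mrefl p.1 ∘ mrefl p.2)^[n] ≠ id := by
  intro p hp n hn
  simp only [List.mem_cons, List.not_mem_nil, or_false] at hp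
  rcases hp with rfl | rfl | rfl
  · exact tangentAtInfinity_vt_vb.mrefl_comp_mrefl_iterate_ne_id hn
  · exact tangentAtInfinity_vu_vl.mrefl_comp_mrefl_iterate_ne_id hn
  · exact tangentAtInfinity_vc_vi0.mrefl_comp_mrefl_iterate_ne_id hn
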